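/- Let (G_n) be a sequence of connected d-regular simple graphs on n vertices with d = d(n) → ∞ and ε = ε(n) ∈ (0,1), satisfying properties P1, P2 and P3, and fix a constant K₀ > 0; set L = ⌈K₀·T·log n⌉ where T is the mixing time. Then there exist a constant C and n₀ such that for all n ≥ n₀ and every vertex v: for every starting vertex x at graph distance at least 2 from v, the probability that the lazy walk started at x visits the neighbourhood N(v) within L steps is at most C/d; and for every starting vertex x at graph distance at least 3 from v, this probability is at most C/d². -/

import Mathlib

open Finset Filter

noncomputable section
open scoped Classical

variable {V : Type*} [Fintype V] [DecidableEq V]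

/-- Transition matrix of the simple random walk on a `d`-regular graph `G`:
from `u` the walk moves to a uniformly random neighbour. -/
def simpleStep (G : SimpleGraph V) (d : ℕ) : Matrix V V ℝ :=
  Matrix.of fun u v => if G.Adj u v then ((d : ℝ))⁻¹ else 0

/-- Transition matrix of the lazy random walk `M = (1/2)(I + A/d)`. -/
def lazyStep (G : SimpleGraph V) (d : ℕ) : Matrix V V ℝ :=
  Matrix.of fun u v =>
    (if u = v then (2 : ℝ)⁻¹ else 0) + (2 : ℝ)⁻¹ * (if G.Adj u v then ((d : ℝ))⁻¹ else 0)

/-- Probability that the first `t` steps of the Markov chain with transition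
matrix `M` started at `u` form a trajectory satisfying `E`:  the sum, over all
paths realizing the event, of the product of the transition probabilities. -/
def walkProb (M : Matrix V V ℝ) (u : V) (t : ℕ)
    (E : (Fin (t + 1) → V) → Prop) : ℝ :=
  ∑ p : Fin (t + 1) → V,
    if p 0 = u ∧ E p then ∏ i : Fin t, M (p i.castSucc) (p i.succ) else 0

/-- The mixing time `T = min { t ≥ 1 : |M^t x y - 1/n| ≤ n⁻³ for all x,y }`. -/
def mixingTime (G : SimpleGraph V) (d : ℕ) : ℕ :=
  sInf {T : ℕ | 1 ≤ T ∧ ∀ x y : V,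
    |((lazyStep G d) ^ T) x y - ((Fintype.card V : ℝ))⁻¹| ≤ (((Fintype.card V : ℝ)) ^ 3)⁻¹}

/-- Property P1: the second largest eigenvalue of the lazy walk matrix is at
most `1 - g`, stated via the Rayleigh quotient on the orthogonal complement of
the constant (top) eigenvector. -/
def SpectralGapLB (G : SimpleGraph V) (d : ℕ) (g : ℝ) : Prop :=
  ∀ x : V → ℝ, (∑ v : V, x v) = 0 →
    (∑ u : V, ∑ v : V, x u * lazyStep G d u v * x v) ≤ (1 - g) * ∑ v : V, x v ^ 2

/-- Property P3 with constant `ρ₂`: for vertices `u,v` at distance at most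
`d^ε`, the number of neighbours `w` of `v` with `dist w u ≤ dist u v` is at
most `ρ₂ · dist u v`. -/
def PropP3 (G : SimpleGraph V) (d : ℕ) (ε ρ₂ : ℝ) : Prop :=
  ∀ u v : V, (G.dist u v : ℝ) ≤ (d : ℝ) ^ ε →
    (((univ : Finset V).filter fun w => G.Adj v w ∧ G.dist w u ≤ G.dist u v).card : ℝ) ≤
      ρ₂ * (G.dist u v : ℝ)

/-- The number of edges of `G` with both endpoints in `S`. -/
def edgesInside (G : SimpleGraph V) (S : Finset V) : ℕ :=
  ((S ×ˢ S).filter fun p => G.Adj p.1 p.2).card / 2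

/-- The set of vertices of `G` not visited by the trajectory `p` at any step
`s` with `t₀ ≤ s` contains a connected (in the induced subgraph) subset of at
least `K` vertices; equivalently, the subgraph induced by this vacant set has a
connected component with at least `K` vertices. -/
def bigVacantComponent (G : SimpleGraph V) {t : ℕ} (p : Fin (t + 1) → V)
    (t₀ : ℕ) (K : ℝ) : Prop :=
  ∃ S : Finset V, (∀ v ∈ S, ∀ s : Fin (t + 1), t₀ ≤ (s : ℕ) → p s ≠ v) ∧
    (G.induce (S : Set V)).Connected ∧ K ≤ (S.card : ℝ)

/-!
Let `r` be the distance of the walker from `v`. By P3 a step from distance `r` fails to increase `r`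
with probability `O(r/d)`, so `h(r) = κ^(r-1) r!` with `κ = 2ρ/d` satisfies
`κ r h(r-1) / 2 + h(r+1) ≤ h(r)`, i.e. it is superharmonic as long as `κ (r+1) ≤ 1/2`. Freezing
`h` beyond a cutoff distance `k + 1` costs at most `h(k)` per step, so `N(v)`, where `h = 1`, is
reached within `L` steps with probability at most `h(r) + L h(k)`, and `h(j+1) = O(d^(-j))`. The
spectral gap makes `L` at most polynomial in `d` and `log n`; a cutoff `k` of order `log log n`
makes `L h(k)` negligible, and P2 is what allows P3 to be applied up to that distance.
-/

open Matrix Real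

section Walk

variable {M : Matrix V V ℝ}

lemma walkProb_succ (M : Matrix V V ℝ) (u : V) (t : ℕ) (E : (Fin (t + 1 + 1) → V) → Prop) :
    walkProb M u (t + 1) E = ∑ w, M u w * walkProb M w t (fun q => E (Fin.cons u q)) := by
  unfold walkProb
  rw [← (Fin.consEquiv fun _ => V).sum_comp, Fintype.sum_prod_type, Fintype.sum_eq_single u]
  · simp_rw [mul_sum]
    rw [sum_comm]
    refine sum_congr rfl fun q _ => ?_
    rw [Fintype.sum_eq_single (q 0) fun w hw => by simp [hw.symm]]
    simp [Fin.consEquiv, Fin.prod_univ_succ]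
  · intro w hw
    simp [Fin.consEquiv, hw]

lemma walkProb_zero (M : Matrix V V ℝ) (u : V) (E : (Fin 1 → V) → Prop) :
    walkProb M u 0 E = if E fun _ => u then 1 else 0 := by
  rw [walkProb, Fintype.sum_eq_single fun _ => u]
  · simp
  · rintro p hp
    refine if_neg fun h => hp (funext fun i => ?_)
    rw [Fin.fin_one_eq_zero i, h.1]

lemma walkProb_le_one (hM : M ∈ rowStochastic ℝ V) (t : ℕ) (u : V)
    (E : (Fin (t + 1) → V) → Prop) : walkProb M u t E ≤ 1 := by
  induction t generalizing u with
  | zero =>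
    rw [walkProb_zero]
    split_ifs <;> norm_num
  | succ t ih =>
    rw [walkProb_succ, ← sum_row_of_mem_rowStochastic hM u]
    gcongr with w
    exact mul_le_of_le_one_right (nonneg_of_mem_rowStochastic hM) (ih w _)

lemma walkProb_succ_exists_of_not {S : V → Prop} {u : V} (hu : ¬ S u) (t : ℕ) :
    walkProb M u (t + 1) (fun p => ∃ s, S (p s)) =
      (M *ᵥ fun w => walkProb M w t fun p => ∃ s, S (p s)) u := by
  simp [walkProb_succ, Fin.exists_fin_succ, hu, mulVec, dotProduct]

theorem walkProb_exists_le_of_mulVec_le (hM : M ∈ rowStochastic ℝ V) {S : V → Prop} {f : V → ℝ}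
    {δ : ℝ} (hδ : 0 ≤ δ) (hf : ∀ u, 0 ≤ f u) (hS : ∀ u, S u → 1 ≤ f u)
    (hstep : ∀ u, f u < 1 → (M *ᵥ f) u ≤ f u + δ) (t : ℕ) (u : V) :
    walkProb M u t (fun p => ∃ s, S (p s)) ≤ f u + t * δ := by
  induction t generalizing u with
  | zero =>
    rw [walkProb_zero]
    split_ifs with h
    · simpa using hS u h.choose_spec
    · simpa using hf u
  | succ t ih =>
    rcases le_or_gt 1 (f u) with h | h
    · exact (walkProb_le_one hM _ _ _).trans (le_add_of_le_of_nonneg h (by positivity))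
    calc walkProb M u (t + 1) (fun p => ∃ s, S (p s))
        = ∑ w, M u w * walkProb M w t (fun p => ∃ s, S (p s)) :=
          walkProb_succ_exists_of_not (fun hu => h.not_ge (hS u hu)) t
      _ ≤ ∑ w, M u w * (f w + t * δ) := by
          gcongr with w
          exacts [nonneg_of_mem_rowStochastic hM, ih w]
      _ = (M *ᵥ f) u + t * δ := by
          simp only [mul_add, sum_add_distrib, ← sum_mul, sum_row_of_mem_rowStochastic hM,
            one_mul, mulVec, dotProduct]
      _ ≤ f u + (t + 1 : ℕ) * δ := by
          push_cast
          linarith [hstep u h]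

end Walk

section Mixing

variable {M : Matrix V V ℝ}

lemma mulVec_dotProduct_self_le (hM : M ∈ doublyStochastic ℝ V) (x : V → ℝ) :
    (M *ᵥ x) ⬝ᵥ (M *ᵥ x) ≤ x ⬝ᵥ x := by
  calc (M *ᵥ x) ⬝ᵥ (M *ᵥ x)
      = ∑ u, (∑ w, M u w * x w) ^ 2 := by simp only [dotProduct, mulVec, sq]
    _ ≤ ∑ u, ∑ w, M u w * x w ^ 2 := by
        gcongr with u
        exact pow_arith_mean_le_arith_mean_pow_of_even _ _ _
          (fun w _ => nonneg_of_mem_doublyStochastic hM) (sum_row_of_mem_doublyStochastic hM u)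
          even_two
    _ = x ⬝ᵥ x := by
        rw [sum_comm]
        simp only [← sum_mul, sum_col_of_mem_doublyStochastic hM, one_mul, dotProduct, sq]

lemma pow_mulVec_dotProduct_self_le {q : ℝ} (hM : M ∈ doublyStochastic ℝ V) (hq₀ : 0 ≤ q)
    (hq : ∀ x : V → ℝ, ∑ v, x v = 0 → (M *ᵥ x) ⬝ᵥ (M *ᵥ x) ≤ q * (x ⬝ᵥ x)) (t : ℕ)
    {x : V → ℝ} (hx : ∑ v, x v = 0) :
    (M ^ t *ᵥ x) ⬝ᵥ (M ^ t *ᵥ x) ≤ q ^ t * (x ⬝ᵥ x) := by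
  induction t with
  | zero => simp
  | succ t ih =>
    have hmean : ∑ v, (M ^ t *ᵥ x) v = 0 := by
      rw [sum_mulVec_of_mem_doublyStochastic (pow_mem hM t), hx]
    calc (M ^ (t + 1) *ᵥ x) ⬝ᵥ (M ^ (t + 1) *ᵥ x)
        ≤ q * ((M ^ t *ᵥ x) ⬝ᵥ (M ^ t *ᵥ x)) := by
          rw [pow_succ', ← mulVec_mulVec]
          exact hq _ hmean
      _ ≤ q * (q ^ t * (x ⬝ᵥ x)) := by gcongr
      _ = q ^ (t + 1) * (x ⬝ᵥ x) := by ring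

lemma sq_pow_apply_sub_inv_card_le {q : ℝ} (hM : M ∈ doublyStochastic ℝ V) (hq₀ : 0 ≤ q)
    (hq : ∀ x : V → ℝ, ∑ v, x v = 0 → (M *ᵥ x) ⬝ᵥ (M *ᵥ x) ≤ q * (x ⬝ᵥ x)) (t : ℕ) (x y : V) :
    ((M ^ t) x y - (Fintype.card V : ℝ)⁻¹) ^ 2 ≤ q ^ t := by
  have : Nonempty V := ⟨x⟩
  have hcard : (Fintype.card V : ℝ) ≠ 0 := by simp
  set z : V → ℝ := Pi.single y 1 - fun _ => (Fintype.card V : ℝ)⁻¹ with hz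
  have hz_sum : ∑ v, z v = 0 := by simp [hz, hcard]
  have hz_norm : z ⬝ᵥ z ≤ 1 := by
    calc z ⬝ᵥ z = z y - (Fintype.card V : ℝ)⁻¹ * ∑ v, z v := by
          conv_lhs => rw [hz, sub_dotProduct, ← hz, single_dotProduct, one_mul]
          simp only [dotProduct, mul_sum]
      _ ≤ 1 := by rw [hz_sum]; simp [hz]
  have hz_apply : (M ^ t *ᵥ z) x = (M ^ t) x y - (Fintype.card V : ℝ)⁻¹ := by
    have := sum_row_of_mem_doublyStochastic (pow_mem hM t) x
    rw [hz, mulVec_sub, Pi.sub_apply, mulVec_single_one, col_apply]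
    simp [mulVec, dotProduct, ← sum_mul, this]
  calc ((M ^ t) x y - (Fintype.card V : ℝ)⁻¹) ^ 2
      = (M ^ t *ᵥ z) x * (M ^ t *ᵥ z) x := by rw [hz_apply, sq]
    _ ≤ (M ^ t *ᵥ z) ⬝ᵥ (M ^ t *ᵥ z) :=
        single_le_sum (f := fun u => (M ^ t *ᵥ z) u * (M ^ t *ᵥ z) u)
          (fun _ _ => mul_self_nonneg _) (mem_univ x)
    _ ≤ q ^ t * (z ⬝ᵥ z) := pow_mulVec_dotProduct_self_le hM hq₀ hq t hz_sum
    _ ≤ q ^ t := mul_le_of_le_one_right (by positivity) hz_norm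

end Mixing

section LazyWalk

variable {G : SimpleGraph V} {d : ℕ}

omit [Fintype V] [DecidableEq V] in
lemma simpleStep_eq_smul_adjMatrix (G : SimpleGraph V) (d : ℕ) :
    simpleStep G d = (d : ℝ)⁻¹ • G.adjMatrix ℝ := by
  ext u v
  simp [simpleStep]

omit [Fintype V] in
lemma lazyStep_eq_smul_add (G : SimpleGraph V) (d : ℕ) :
    lazyStep G d = (2⁻¹ : ℝ) • 1 + (2⁻¹ : ℝ) • simpleStep G d := by
  ext u v
  simp [lazyStep, simpleStep, one_apply]

lemma simpleStep_mem_doublyStochastic (hd : d ≠ 0) (hreg : G.IsRegularOfDegree d) :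
    simpleStep G d ∈ doublyStochastic ℝ V := by
  refine mem_doublyStochastic.2 ⟨fun u v => ?_, ?_, ?_⟩
  · rw [simpleStep, of_apply]
    positivity
  all_goals
    ext u
    simp [simpleStep_eq_smul_adjMatrix, smul_mulVec, vecMul_smul, hreg u, hd]

lemma lazyStep_mem_doublyStochastic (hd : d ≠ 0) (hreg : G.IsRegularOfDegree d) :
    lazyStep G d ∈ doublyStochastic ℝ V := by
  rw [lazyStep_eq_smul_add]
  exact convex_doublyStochastic (one_mem _) (simpleStep_mem_doublyStochastic hd hreg)
    (by norm_num) (by norm_num) (by norm_num)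

lemma lazyStep_mulVec (G : SimpleGraph V) (d : ℕ) (x : V → ℝ) :
    lazyStep G d *ᵥ x = (2⁻¹ : ℝ) • (x + simpleStep G d *ᵥ x) := by
  rw [lazyStep_eq_smul_add, add_mulVec, smul_mulVec, smul_mulVec, one_mulVec, smul_add]

lemma lazyStep_mulVec_dotProduct_self_le_dotProduct_mulVec (hd : d ≠ 0)
    (hreg : G.IsRegularOfDegree d) (x : V → ℝ) :
    (lazyStep G d *ᵥ x) ⬝ᵥ (lazyStep G d *ᵥ x) ≤ x ⬝ᵥ (lazyStep G d *ᵥ x) := by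
  have hP := mulVec_dotProduct_self_le (simpleStep_mem_doublyStochastic hd hreg) x
  simp only [lazyStep_mulVec, smul_dotProduct, dotProduct_smul, add_dotProduct, dotProduct_add,
    smul_eq_mul, dotProduct_comm (simpleStep G d *ᵥ x) x]
  linarith

lemma SpectralGapLB.lazyStep_mulVec_dotProduct_self_le {g : ℝ}
    (hgap : SpectralGapLB G d g) (hd : d ≠ 0) (hreg : G.IsRegularOfDegree d) {x : V → ℝ}
    (hx : ∑ v, x v = 0) :
    (lazyStep G d *ᵥ x) ⬝ᵥ (lazyStep G d *ᵥ x) ≤ exp (-g) * (x ⬝ᵥ x) := by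
  calc (lazyStep G d *ᵥ x) ⬝ᵥ (lazyStep G d *ᵥ x)
      ≤ x ⬝ᵥ (lazyStep G d *ᵥ x) :=
        lazyStep_mulVec_dotProduct_self_le_dotProduct_mulVec hd hreg x
    _ ≤ (1 - g) * (x ⬝ᵥ x) := by
        simpa only [dotProduct, mulVec, mul_sum, mul_assoc, sq] using hgap x hx
    _ ≤ exp (-g) * (x ⬝ᵥ x) := by
        gcongr
        · exact sum_nonneg fun _ _ => mul_self_nonneg _
        · exact one_sub_le_exp_neg g

theorem mixingTime_le (hd : d ≠ 0) (hreg : G.IsRegularOfDegree d) {g : ℝ} (hg : 0 < g)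
    (hgap : SpectralGapLB G d g) :
    (mixingTime G d : ℝ) ≤ 6 * log (Fintype.card V) / g + 1 := by
  set N : ℝ := (Fintype.card V : ℝ)
  set t : ℕ := ⌊6 * log N / g⌋₊ + 1
  have ht : 6 * log N ≤ g * t := by
    rw [mul_comm g, ← div_le_iff₀ hg]
    exact_mod_cast (Nat.lt_floor_add_one _).le
  suffices h : mixingTime G d ≤ t from calc
    (mixingTime G d : ℝ) ≤ t := by exact_mod_cast h
    _ ≤ 6 * log N / g + 1 := by
      push_cast [t]
      gcongr
      exact Nat.floor_le (by positivity)
  refine Nat.sInf_le ⟨Nat.le_add_left 1 _, fun x y => ?_⟩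
  have hNpos : 0 < N := by
    have : Nonempty V := ⟨x⟩
    exact Nat.cast_pos.2 Fintype.card_pos
  refine abs_le_of_sq_le_sq ?_ (by positivity)
  calc ((lazyStep G d ^ t) x y - N⁻¹) ^ 2
      ≤ exp (-g) ^ t := sq_pow_apply_sub_inv_card_le (lazyStep_mem_doublyStochastic hd hreg)
        (exp_pos _).le (fun _ => hgap.lazyStep_mulVec_dotProduct_self_le hd hreg) t x y
    _ = exp (-(g * t)) := by rw [← exp_nat_mul]; ring_nf
    _ ≤ exp (-(6 * log N)) := by gcongr
    _ = (N ^ 3)⁻¹ ^ 2 := by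
        rw [Real.exp_neg, show 6 * log N = (6 : ℕ) * log N by norm_num, exp_nat_mul, exp_log hNpos]
        ring

end LazyWalk

section DescentWeight

/-- The potential that bounds the probability of getting from distance `r` down to distance `1`
from a vertex. Its value is `1` at both `r = 0` and `r = 1`, the subtraction being truncated. -/
def descentWeight (κ : ℝ) (r : ℕ) : ℝ := κ ^ (r - 1) * (r.factorial : ℝ)

variable {κ : ℝ}

lemma descentWeight_nonneg (hκ : 0 ≤ κ) (r : ℕ) : 0 ≤ descentWeight κ r := by
  unfold descentWeight
  positivity

lemma descentWeight_of_le_one (κ : ℝ) {r : ℕ} (hr : r ≤ 1) : descentWeight κ r = 1 := by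
  interval_cases r <;> simp [descentWeight]

lemma descentWeight_succ (κ : ℝ) {r : ℕ} (hr : 1 ≤ r) :
    descentWeight κ (r + 1) = κ * (r + 1) * descentWeight κ r := by
  obtain ⟨q, rfl⟩ := Nat.exists_eq_add_of_le' hr
  simp only [descentWeight, Nat.add_sub_cancel, Nat.factorial_succ (q + 1), pow_succ]
  push_cast
  ring

lemma descentWeight_succ_le_half (hκ : 0 ≤ κ) {k r : ℕ} (hk : κ * (k + 1) ≤ 1 / 2) (hr : 1 ≤ r)
    (hrk : r ≤ k) : descentWeight κ (r + 1) ≤ 1 / 2 * descentWeight κ r := by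
  rw [descentWeight_succ κ hr]
  have := descentWeight_nonneg hκ r
  gcongr
  calc κ * (r + 1) ≤ κ * (k + 1) := by gcongr
    _ ≤ 1 / 2 := hk

lemma antitoneOn_descentWeight (hκ : 0 ≤ κ) {k : ℕ} (hk : κ * (k + 1) ≤ 1 / 2) :
    AntitoneOn (descentWeight κ) (Set.Iic (k + 1)) := by
  refine antitoneOn_of_succ_le Set.ordConnected_Iic fun r _ _ hr => ?_
  rcases Nat.eq_zero_or_pos r with rfl | hr₀
  · simp [descentWeight_of_le_one]
  · have := descentWeight_succ_le_half hκ hk hr₀ (Nat.le_of_succ_le_succ hr)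
    rw [Order.succ_eq_add_one]
    linarith [descentWeight_nonneg hκ r]

lemma descentWeight_succ_le_pow (hκ : 0 ≤ κ) (q : ℕ) :
    descentWeight κ (q + 1) ≤ (κ * (q + 1)) ^ q := by
  have hfact : (q + 1).factorial ≤ (q + 1) ^ q := by
    simpa [← Nat.factorial_mul_descFactorial q.le_succ] using Nat.descFactorial_le_pow (q + 1) q
  rw [descentWeight, Nat.add_sub_cancel, mul_pow]
  gcongr
  exact_mod_cast hfact

end DescentWeight

section Visit

variable {G : SimpleGraph V} {d k : ℕ} {κ ε ρ : ℝ} {u v : V}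

/-- The function `descentWeight κ` of the distance to `v`, frozen from distance `k + 1` on. Along
the walk it is a supermartingale up to an error of `descentWeight κ k` per step. -/
def visitPotential (κ : ℝ) (k : ℕ) (G : SimpleGraph V) (v u : V) : ℝ :=
  descentWeight κ (min (G.dist u v) (k + 1))

omit [DecidableEq V] in
lemma simpleStep_mulVec_apply_le (hd : d ≠ 0) (hreg : G.IsRegularOfDegree d) {f : V → ℝ}
    {a b : ℝ} {p : V → Prop} [DecidablePred p] (ha : ∀ w, G.Adj u w → p w → f w ≤ a + b)
    (hb : ∀ w, G.Adj u w → ¬ p w → f w ≤ b) :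
    (simpleStep G d *ᵥ f) u ≤ (d : ℝ)⁻¹ * (#{w | G.Adj u w ∧ p w} * a) + b := by
  calc (simpleStep G d *ᵥ f) u
      = (d : ℝ)⁻¹ * ∑ w ∈ G.neighborFinset u, f w := by
        rw [simpleStep_eq_smul_adjMatrix, smul_mulVec, Pi.smul_apply,
          SimpleGraph.adjMatrix_mulVec_apply, smul_eq_mul]
    _ ≤ (d : ℝ)⁻¹ * ∑ w ∈ G.neighborFinset u, ((if p w then a else 0) + b) := by
        gcongr with w hw
        rw [SimpleGraph.mem_neighborFinset] at hw
        split_ifs with hp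
        · exact ha w hw hp
        · simpa using hb w hw hp
    _ = (d : ℝ)⁻¹ * (#{w | G.Adj u w ∧ p w} * a + d * b) := by
        rw [sum_add_distrib, sum_const, SimpleGraph.card_neighborFinset_eq_degree, hreg u,
          ← sum_filter, sum_const, SimpleGraph.neighborFinset_eq_filter, filter_filter,
          nsmul_eq_mul, nsmul_eq_mul]
    _ = (d : ℝ)⁻¹ * (#{w | G.Adj u w ∧ p w} * a) + b := by field_simp

omit [Fintype V] [DecidableEq V] in
lemma dist_le_dist_add_one_of_adj {w : V} (h : G.Adj u w) (v : V) :
    G.dist u v ≤ G.dist w v + 1 := by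
  have := h.reachable.dist_triangle_left v
  rw [SimpleGraph.dist_eq_one_iff_adj.2 h] at this
  omega

omit [Fintype V] [DecidableEq V] in
lemma visitPotential_le (hκ₀ : 0 ≤ κ) (hκ : κ * (k + 1) ≤ 1 / 2) {j : ℕ} (hj : j ≤ G.dist u v)
    (hjk : j ≤ k + 1) : visitPotential κ k G v u ≤ descentWeight κ j :=
  antitoneOn_descentWeight hκ₀ hκ hjk (Set.mem_Iic.2 (min_le_right _ _)) (le_min hj hjk)

omit [DecidableEq V] in
lemma simpleStep_mulVec_visitPotential_le_of_dist_le (hd : d ≠ 0) (hreg : G.IsRegularOfDegree d)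
    (hρ : 0 ≤ ρ) (hP3 : PropP3 G d ε ρ) (hkε : k ≤ (d : ℝ) ^ ε)
    (hκ : 2 * ρ / d * (k + 1) ≤ 1 / 2) (hu : 2 ≤ G.dist u v) (huk : G.dist u v ≤ k) :
    (simpleStep G d *ᵥ visitPotential (2 * ρ / d) k G v) u ≤
      visitPotential (2 * ρ / d) k G v u := by
  set κ := 2 * ρ / d with hκ_def
  have hκ₀ : 0 ≤ κ := by positivity
  obtain ⟨r, hr⟩ : ∃ r, G.dist u v = r + 1 := Nat.exists_eq_add_of_le' (by omega)
  have hcard : (#{w | G.Adj u w ∧ G.dist w v ≤ r + 1} : ℝ) ≤ ρ * (r + 1) := by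
    have := hP3 v u (le_trans (by rw [SimpleGraph.dist_comm]; exact_mod_cast huk) hkε)
    rw [SimpleGraph.dist_comm, hr] at this
    exact_mod_cast this
  have hnear : ∀ w, G.Adj u w → G.dist w v ≤ r + 1 →
      visitPotential κ k G v w ≤ descentWeight κ r + descentWeight κ (r + 2) := fun w hw _ => by
    have := dist_le_dist_add_one_of_adj hw v
    exact le_add_of_le_of_nonneg (visitPotential_le hκ₀ hκ (by omega) (by omega))
      (descentWeight_nonneg hκ₀ _)
  have hfar : ∀ w, G.Adj u w → ¬ G.dist w v ≤ r + 1 →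
      visitPotential κ k G v w ≤ descentWeight κ (r + 2) := fun w _ hwv =>
    visitPotential_le hκ₀ hκ (by omega) (by omega)
  calc (simpleStep G d *ᵥ visitPotential κ k G v) u
      ≤ (d : ℝ)⁻¹ * (#{w | G.Adj u w ∧ G.dist w v ≤ r + 1} * descentWeight κ r) +
          descentWeight κ (r + 2) := simpleStep_mulVec_apply_le hd hreg hnear hfar
    _ ≤ (d : ℝ)⁻¹ * (ρ * (r + 1) * descentWeight κ r) + descentWeight κ (r + 2) := by
        have := descentWeight_nonneg hκ₀ r
        gcongr
    _ = 1 / 2 * descentWeight κ (r + 1) + descentWeight κ (r + 2) := by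
        rw [descentWeight_succ κ (r := r) (by omega), hκ_def]
        ring
    _ ≤ 1 / 2 * descentWeight κ (r + 1) + 1 / 2 * descentWeight κ (r + 1) := by
        gcongr
        exact descentWeight_succ_le_half hκ₀ hκ (by omega) (by omega)
    _ = visitPotential κ k G v u := by
        rw [visitPotential, hr, min_eq_left (by omega)]
        ring

omit [DecidableEq V] in
lemma simpleStep_mulVec_visitPotential_le_of_lt_dist (hd : d ≠ 0) (hreg : G.IsRegularOfDegree d)
    (hκ₀ : 0 ≤ κ) (hκ : κ * (k + 1) ≤ 1 / 2) (huk : k < G.dist u v) :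
    (simpleStep G d *ᵥ visitPotential κ k G v) u ≤ descentWeight κ k := by
  have hfar : ∀ w, G.Adj u w → visitPotential κ k G v w ≤ descentWeight κ k := fun w hw => by
    have := dist_le_dist_add_one_of_adj hw v
    exact visitPotential_le hκ₀ hκ (by omega) (by omega)
  simpa using simpleStep_mulVec_apply_le (p := fun _ => False) (a := 0) hd hreg (by simp)
    fun w hw _ => hfar w hw

theorem walkProb_exists_adj_le (hd : d ≠ 0) (hreg : G.IsRegularOfDegree d)
    (hρ : 0 ≤ ρ) (hP3 : PropP3 G d ε ρ) (hkε : k ≤ (d : ℝ) ^ ε)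
    (hκ : 2 * ρ / d * (k + 1) ≤ 1 / 2) {j : ℕ} (hjk : j ≤ k + 1) (hj : j ≤ G.dist u v) (t : ℕ) :
    walkProb (lazyStep G d) u t (fun p => ∃ s, G.Adj v (p s)) ≤
      descentWeight (2 * ρ / d) j + t * descentWeight (2 * ρ / d) k := by
  have hκ₀ : 0 ≤ 2 * ρ / d := by positivity
  have hmem := (mem_doublyStochastic_iff_mem_rowStochastic_and_mem_colStochastic.1
    (lazyStep_mem_doublyStochastic hd hreg)).1
  have hbound := walkProb_exists_le_of_mulVec_le hmem (S := G.Adj v)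
    (f := visitPotential (2 * ρ / d) k G v) (descentWeight_nonneg hκ₀ k)
    (fun _ => descentWeight_nonneg hκ₀ _) ?visited ?step t u
  case visited =>
    intro w hw
    rw [visitPotential, SimpleGraph.dist_eq_one_iff_adj.2 hw.symm,
      descentWeight_of_le_one _ (min_le_left _ _)]
  case step =>
    intro w hw
    have hw₂ : 2 ≤ G.dist w v := by
      by_contra! hlt
      exact hw.ne (descentWeight_of_le_one _ (min_le_of_left_le (Nat.le_of_lt_succ hlt)))
    have hsimple : (simpleStep G d *ᵥ visitPotential (2 * ρ / d) k G v) w ≤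
        visitPotential (2 * ρ / d) k G v w + descentWeight (2 * ρ / d) k := by
      rcases le_or_gt (G.dist w v) k with hwk | hwk
      · exact le_add_of_le_of_nonneg (simpleStep_mulVec_visitPotential_le_of_dist_le hd hreg
          hρ hP3 hkε hκ hw₂ hwk) (descentWeight_nonneg hκ₀ k)
      · exact le_add_of_nonneg_of_le (descentWeight_nonneg hκ₀ _)
          (simpleStep_mulVec_visitPotential_le_of_lt_dist hd hreg hκ₀ hκ hwk)
    rw [lazyStep_mulVec, Pi.smul_apply, Pi.add_apply, smul_eq_mul]
    linarith [descentWeight_nonneg hκ₀ k]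
  refine hbound.trans (add_le_add_left (visitPotential_le hκ₀ hκ hj hjk) _)

end Visit

section Cutoff

variable {D Y : ℝ}

lemma pow_le_inv_pow_mul_exp_sq {b : ℝ} {p q : ℕ} (hD : exp 1 ≤ D) (hY : 0 ≤ Y) (hb₀ : 0 ≤ b)
    (hb : b ≤ D ^ (-(1 / 4) : ℝ)) (hq : 4 * (p + 2 * Y) ≤ q) :
    b ^ q ≤ (D ^ p * exp Y ^ 2)⁻¹ := by
  have hD₁ : 1 ≤ D := (one_le_exp zero_le_one).trans hD
  have hD₀ : 0 < D := one_pos.trans_le hD₁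
  calc b ^ q ≤ (D ^ (-(1 / 4) : ℝ)) ^ q := by gcongr
    _ = D ^ (-(1 / 4) * q : ℝ) := by rw [rpow_mul hD₀.le, rpow_natCast]
    _ ≤ D ^ (-(p + 2 * Y) : ℝ) := rpow_le_rpow_of_exponent_le hD₁ (by linarith)
    _ = (D ^ p * D ^ (2 * Y))⁻¹ := by rw [rpow_neg hD₀.le, rpow_add hD₀, rpow_natCast]
    _ ≤ (D ^ p * exp 1 ^ (2 * Y))⁻¹ := by gcongr
    _ = (D ^ p * exp Y ^ 2)⁻¹ := by rw [exp_one_rpow, two_mul, exp_add, sq]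

lemma mul_div_le_rpow_neg_quarter {a : ℝ} (hD : 0 < D) (ha : a ^ 4 ≤ D) (hY : Y ^ 2 ≤ D)
    (hY₀ : 0 ≤ Y) : a * Y / D ≤ D ^ (-(1 / 4) : ℝ) := by
  have ha' : a ≤ D ^ (1 / 4 : ℝ) :=
    le_of_pow_le_pow_left₀ four_ne_zero (by positivity) (by
      rwa [← rpow_mul_natCast hD.le, Nat.cast_ofNat, one_div_mul_cancel four_ne_zero, rpow_one])
  have hY' : Y ≤ D ^ (1 / 2 : ℝ) := by
    rw [← sqrt_eq_rpow]
    exact le_sqrt_of_sq_le hY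
  calc a * Y / D ≤ D ^ (1 / 4 : ℝ) * D ^ (1 / 2 : ℝ) / D ^ (1 : ℝ) := by
        rw [rpow_one]
        gcongr
    _ = D ^ (-(1 / 4) : ℝ) := by
        rw [← rpow_add hD, ← rpow_sub hD]
        norm_num

lemma exists_descentWeight_le {ε ρ : ℝ} {p : ℕ} (hρ : 0 ≤ ρ) (hε : ε ≤ 1) (hD : 16 ≤ D)
    (hρD : (18 * ρ) ^ 4 ≤ D) (hY : 4 * p + 9 ≤ Y) (hYD : Y ^ 2 ≤ D ^ ε) :
    ∃ k : ℕ, p ≤ k ∧ k ≤ D ^ ε ∧ 2 * ρ / D * (k + 1) ≤ 1 / 2 ∧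
      descentWeight (2 * ρ / D) k ≤ (D ^ p * exp Y ^ 2)⁻¹ := by
  set q : ℕ := ⌈4 * (p + 2 * Y)⌉₊
  have hY₀ : 0 ≤ Y := by linarith [p.cast_nonneg (α := ℝ)]
  have hκ₀ : 0 ≤ 2 * ρ / D := by positivity
  have hq : 4 * (p + 2 * Y) ≤ q := Nat.le_ceil _
  have hqY : (q : ℝ) + 2 ≤ 9 * Y := by
    linarith [Nat.ceil_lt_add_one (by positivity : 0 ≤ 4 * (p + 2 * Y))]
  have hκ : 2 * ρ / D * (q + 2) ≤ D ^ (-(1 / 4) : ℝ) := by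
    calc 2 * ρ / D * (q + 2) ≤ 2 * ρ / D * (9 * Y) := by gcongr
      _ = 18 * ρ * Y / D := by ring
      _ ≤ D ^ (-(1 / 4) : ℝ) := by
        refine mul_div_le_rpow_neg_quarter (by linarith) hρD (hYD.trans ?_) hY₀
        exact rpow_le_self_of_one_le (by linarith) hε
  have hD' : D ^ (-(1 / 4) : ℝ) ≤ 1 / 2 := by
    calc D ^ (-(1 / 4) : ℝ) ≤ 16 ^ (-(1 / 4) : ℝ) :=
          rpow_le_rpow_of_nonpos (by norm_num) hD (by norm_num)
      _ = (2 ^ (4 : ℝ)) ^ (-(1 / 4) : ℝ) := by norm_num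
      _ = 1 / 2 := by
        rw [← rpow_mul zero_le_two]
        norm_num [rpow_neg_one]
  refine ⟨q + 1, ?_, ?_, ?_, ?_⟩
  · exact_mod_cast (by push_cast; linarith : (p : ℝ) ≤ (q + 1 : ℕ))
  · push_cast
    nlinarith
  · push_cast
    linarith
  · refine (descentWeight_succ_le_pow hκ₀ q).trans ?_
    refine pow_le_inv_pow_mul_exp_sq (by linarith [exp_one_lt_three]) hY₀ (by positivity) ?_ hq
    exact le_trans (by gcongr; norm_num) hκ

end Cutoff

lemma eventually_sq_le_rpow_of_tendsto {ι : Type*} {l : Filter ι} {Y D ε : ι → ℝ}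
    (hY : ∀ᶠ i in l, 0 ≤ Y i) (hD : ∀ᶠ i in l, 0 < D i) (hε : ∀ i, 0 < ε i)
    (h : Tendsto (fun i => Y i ^ (2 / ε i) / D i) l (nhds 0)) :
    ∀ᶠ i in l, Y i ^ 2 ≤ D i ^ ε i := by
  filter_upwards [hY, hD, h.eventually_le_const one_pos] with i hYi hDi hi
  calc Y i ^ 2 = (Y i ^ (2 / ε i)) ^ ε i := by
        rw [← rpow_mul hYi, div_mul_cancel₀ _ (hε i).ne', rpow_two]
    _ ≤ D i ^ ε i := by
        have := (hε i).le
        gcongr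
        exact (div_le_one hDi).1 hi

section VisitBound

variable {G : SimpleGraph V} {d N : ℕ} {c ρ₁ K₀ : ℝ}

lemma ceil_mul_mixingTime_mul_log_le (hd : d ≠ 0) (hreg : G.IsRegularOfDegree d) (hc : 0 < c)
    (hρ₁ : ρ₁ ≤ N) (hgap : SpectralGapLB G d (c / (d : ℝ) ^ ρ₁)) (hK₀ : 0 ≤ K₀)
    (hlog : 1 ≤ log (Fintype.card V)) :
    (⌈K₀ * mixingTime G d * log (Fintype.card V)⌉₊ : ℝ) ≤
      (K₀ * (6 / c + 1) + 1) * ((d : ℝ) ^ N * log (Fintype.card V) ^ 2) := by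
  set ℓ := log (Fintype.card V)
  have hd₁ : (1 : ℝ) ≤ d := by exact_mod_cast Nat.one_le_iff_ne_zero.2 hd
  have hpow : (d : ℝ) ^ ρ₁ ≤ (d : ℝ) ^ N := by
    rw [← rpow_natCast]
    exact rpow_le_rpow_of_exponent_le hd₁ hρ₁
  have hone : 1 ≤ (d : ℝ) ^ N * ℓ := one_le_mul_of_one_le_of_one_le (one_le_pow₀ hd₁) hlog
  have hmix : (mixingTime G d : ℝ) ≤ (6 / c + 1) * ((d : ℝ) ^ N * ℓ) := by
    calc (mixingTime G d : ℝ) ≤ 6 * ℓ / (c / (d : ℝ) ^ ρ₁) + 1 :=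
          mixingTime_le hd hreg (by positivity) hgap
      _ = 6 / c * ((d : ℝ) ^ ρ₁ * ℓ) + 1 := by field_simp
      _ ≤ 6 / c * ((d : ℝ) ^ N * ℓ) + (d : ℝ) ^ N * ℓ := by gcongr
      _ = (6 / c + 1) * ((d : ℝ) ^ N * ℓ) := by ring
  calc (⌈K₀ * mixingTime G d * ℓ⌉₊ : ℝ) ≤ K₀ * mixingTime G d * ℓ + 1 :=
        (Nat.ceil_lt_add_one (by positivity)).le
    _ ≤ K₀ * ((6 / c + 1) * ((d : ℝ) ^ N * ℓ)) * ℓ + (d : ℝ) ^ N * ℓ * ℓ := by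
        gcongr
        exact one_le_mul_of_one_le_of_one_le hone hlog
    _ = (K₀ * (6 / c + 1) + 1) * ((d : ℝ) ^ N * ℓ ^ 2) := by ring

theorem walkProb_exists_adj_le_div_pow {ε ρ₂ : ℝ} {m : ℕ} (hreg : G.IsRegularOfDegree d)
    (hc : 0 < c) (hρ₁ : ρ₁ ≤ N) (hgap : SpectralGapLB G d (c / (d : ℝ) ^ ρ₁)) (hε : ε ≤ 1)
    (hρ₂ : 0 ≤ ρ₂) (hP3 : PropP3 G d ε ρ₂) (hK₀ : 0 ≤ K₀) (hd : (16 : ℝ) ≤ d)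
    (hdρ : (18 * ρ₂) ^ 4 ≤ d) (hlog : 4 * ((N + m : ℕ) : ℝ) + 9 ≤ log (log (Fintype.card V)))
    (hlogd : log (log (Fintype.card V)) ^ 2 ≤ (d : ℝ) ^ ε) {j : ℕ} (hjm : j ≤ m) {u v : V}
    (hj : j + 1 ≤ G.dist u v) :
    walkProb (lazyStep G d) u ⌈K₀ * mixingTime G d * log (Fintype.card V)⌉₊
        (fun p => ∃ s, G.Adj v (p s)) ≤
      ((2 * ρ₂) ^ j * (j + 1).factorial + (K₀ * (6 / c + 1) + 1)) / (d : ℝ) ^ j := by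
  set ℓ := log (Fintype.card V)
  set B := K₀ * (6 / c + 1) + 1
  have hd₀ : d ≠ 0 := by rintro rfl; norm_num at hd
  have hℓ : 1 < ℓ := (log_pos_iff (log_natCast_nonneg _)).1 (lt_of_lt_of_le (by positivity) hlog)
  obtain ⟨k, hpk, hkε, hκ, hk⟩ := exists_descentWeight_le hρ₂ hε hd hdρ hlog hlogd
  rw [exp_log (one_pos.trans hℓ)] at hk
  calc walkProb (lazyStep G d) u ⌈K₀ * mixingTime G d * ℓ⌉₊ (fun p => ∃ s, G.Adj v (p s))
      ≤ descentWeight (2 * ρ₂ / d) (j + 1) +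
          ⌈K₀ * mixingTime G d * ℓ⌉₊ * descentWeight (2 * ρ₂ / d) k :=
        walkProb_exists_adj_le hd₀ hreg hρ₂ hP3 hkε hκ (by omega) hj _
    _ ≤ descentWeight (2 * ρ₂ / d) (j + 1) +
          B * ((d : ℝ) ^ N * ℓ ^ 2) * ((d : ℝ) ^ (N + m) * ℓ ^ 2)⁻¹ := by
        gcongr
        · exact descentWeight_nonneg (by positivity) k
        · exact ceil_mul_mixingTime_mul_log_le hd₀ hreg hc hρ₁ hgap hK₀ hℓ.le
    _ = (2 * ρ₂) ^ j * (j + 1).factorial / (d : ℝ) ^ j + B / (d : ℝ) ^ m := by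
        rw [descentWeight, Nat.add_sub_cancel, div_pow, pow_add]
        field_simp
    _ ≤ (2 * ρ₂) ^ j * (j + 1).factorial / (d : ℝ) ^ j + B / (d : ℝ) ^ j := by
        gcongr
        linarith
    _ = ((2 * ρ₂) ^ j * (j + 1).factorial + B) / (d : ℝ) ^ j := by ring

end VisitBound

theorem visit_neighbourhood_probability_general {ι : Type*} {l : Filter ι} {W : ι → Type*}
    [∀ i, Fintype (W i)] [∀ i, DecidableEq (W i)] {G : ∀ i, SimpleGraph (W i)} {d : ι → ℕ}
    {ε : ι → ℝ} {c ρ₁ ρ₂ K₀ : ℝ} (hcard : Tendsto (fun i => Fintype.card (W i)) l atTop)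
    (hd : Tendsto d l atTop) (hreg : ∀ i, (G i).IsRegularOfDegree (d i)) (hε : ∀ i, ε i ≤ 1)
    (hc : 0 < c) (hgap : ∀ i, SpectralGapLB (G i) (d i) (c / (d i : ℝ) ^ ρ₁))
    (hdeg : ∀ᶠ i in l, log (log (Fintype.card (W i))) ^ 2 ≤ (d i : ℝ) ^ ε i)
    (hρ₂ : 0 ≤ ρ₂) (hP3 : ∀ i, PropP3 (G i) (d i) (ε i) ρ₂) (hK₀ : 0 ≤ K₀) (m : ℕ) :
    ∃ C : ℝ, 0 < C ∧ ∀ᶠ i in l, ∀ v x : W i, ∀ j ≤ m, j + 1 ≤ (G i).dist x v →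
      walkProb (lazyStep (G i) (d i)) x
          ⌈K₀ * mixingTime (G i) (d i) * log (Fintype.card (W i))⌉₊
          (fun p => ∃ s, (G i).Adj v (p s)) ≤ C / (d i : ℝ) ^ j := by
  have hd' : Tendsto (fun i => (d i : ℝ)) l atTop := tendsto_natCast_atTop_atTop.comp hd
  have hloglog : Tendsto (fun i => log (log (Fintype.card (W i)))) l atTop :=
    tendsto_log_atTop.comp (tendsto_log_atTop.comp (tendsto_natCast_atTop_atTop.comp hcard))
  refine ⟨(∑ j ∈ range (m + 1), (2 * ρ₂) ^ j * (j + 1).factorial) + (K₀ * (6 / c + 1) + 1),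
    by positivity, ?_⟩
  filter_upwards [hdeg, hd'.eventually_ge_atTop 16, hd'.eventually_ge_atTop ((18 * ρ₂) ^ 4),
    hloglog.eventually_ge_atTop (4 * ((⌈ρ₁⌉₊ + m : ℕ) : ℝ) + 9)] with i hdi h16 h18 hlog
  intro v x j hjm hj
  refine (walkProb_exists_adj_le_div_pow (hreg i) hc (Nat.le_ceil ρ₁) (hgap i) (hε i) hρ₂ (hP3 i)
    hK₀ h16 h18 hlog hdi hjm hj).trans ?_
  gcongr
  exact single_le_sum (f := fun j => (2 * ρ₂) ^ j * ((j + 1).factorial : ℝ))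
    (fun _ _ => by positivity) (mem_range_succ_iff.2 hjm)

/-- **Lemma 4(ii)**: for a sequence of connected `d`-regular graphs satisfying
P1, P2, P3 and a constant `K₀ > 0`, with `L = ⌈K₀ · T · log n⌉`: for a start at
distance at least 2 (resp. 3) from `v`, the probability that the lazy walk
visits `N(v)` within `L` steps is `O(1/d)` (resp. `O(1/d²)`). -/
theorem visit_neighbourhood_probability
    (G : ∀ n : ℕ, SimpleGraph (Fin (n + 1))) (d : ℕ → ℕ) (ε : ℕ → ℝ)
    (hreg : ∀ n, (G n).IsRegularOfDegree (d n))
    (hconn : ∀ n, (G n).Connected)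
    (hd : Tendsto (fun n => (d n : ℝ)) atTop atTop)
    (hε : ∀ n, 0 < ε n ∧ ε n < 1)
    (hP1 : ∃ c₁ ρ₁ : ℝ, 0 < c₁ ∧ 0 < ρ₁ ∧ ρ₁ ≤ 3 ∧
      ∀ n, SpectralGapLB (G n) (d n) (c₁ / (d n : ℝ) ^ ρ₁))
    (hP2a : Tendsto (fun n : ℕ => Real.log (Real.log ((n : ℝ) + 1)) ^ (2 / ε n) / (d n : ℝ))
      atTop (nhds 0))
    (hP2b : ∃ c₂ : ℝ, 0 < c₂ ∧ ∀ n, 1 ≤ n →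
      (d n : ℝ) ≤ c₂ * (((n : ℝ) + 1) / Real.log ((n : ℝ) + 1)) ^ ((1 : ℝ) / 5))
    (hP3 : ∃ ρ₂ : ℝ, 0 < ρ₂ ∧ ∀ n, PropP3 (G n) (d n) (ε n) ρ₂)
    (K₀ : ℝ) (hK₀ : 0 < K₀) :
    ∃ C : ℝ, 0 < C ∧ ∃ n₀ : ℕ, ∀ n, n₀ ≤ n → ∀ v x : Fin (n + 1),
      (2 ≤ (G n).dist x v →
        walkProb (lazyStep (G n) (d n)) x
            (Nat.ceil (K₀ * (mixingTime (G n) (d n) : ℝ) * Real.log ((n : ℝ) + 1)))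
            (fun p => ∃ s, (G n).Adj v (p s)) ≤ C / (d n : ℝ)) ∧
      (3 ≤ (G n).dist x v →
        walkProb (lazyStep (G n) (d n)) x
            (Nat.ceil (K₀ * (mixingTime (G n) (d n) : ℝ) * Real.log ((n : ℝ) + 1)))
            (fun p => ∃ s, (G n).Adj v (p s)) ≤ C / (d n : ℝ) ^ 2) := by
  obtain ⟨c₁, ρ₁, hc₁, -, -, hgap⟩ := hP1
  obtain ⟨ρ₂, hρ₂, hP3⟩ := hP3
  have hcast : Tendsto (fun n : ℕ => (n : ℝ) + 1) atTop atTop :=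
    tendsto_natCast_atTop_atTop.atTop_add tendsto_const_nhds
  have hdeg := eventually_sq_le_rpow_of_tendsto
    ((tendsto_log_atTop.comp (tendsto_log_atTop.comp hcast)).eventually_ge_atTop 0)
    (hd.eventually_gt_atTop 0) (fun n => (hε n).1) hP2a
  obtain ⟨C, hC, hvisit⟩ := visit_neighbourhood_probability_general (G := G)
    (by simpa using tendsto_add_atTop_nat 1) (tendsto_natCast_atTop_iff.1 hd) hreg
    (fun n => (hε n).2.le) hc₁ hgap (by simpa using hdeg) hρ₂.le hP3 hK₀.le 2
  obtain ⟨n₀, hn₀⟩ := eventually_atTop.1 hvisit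
  refine ⟨C, hC, n₀, fun n hn v x => ?_⟩
  have hx := hn₀ n hn v x
  rw [Fintype.card_fin, Nat.cast_add_one] at hx
  exact ⟨fun h2 => by simpa only [pow_one] using hx 1 one_le_two h2, hx 2 le_rfl⟩

end
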